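/- Let K be an algebraically closed field and Z ⊂ ℙ^r a finite reduced set of points whose h-vector has value k in degree n and k−1 in degree n+1, with n ≥ k ≥ 2, and is zero in all degrees ≥ n+2, and such that the linear systems |[J]_n| and |[J]_{n+1}| (J the artinian reduction of I_Z) are basepoint free. Then at least C(k+1,2) + (k+1)(n−k+2) − 3 points of Z lie on a plane (a 2-dimensional linear subspace of ℙ^r). -/

import Mathlib

open MvPolynomial

/-- The Hilbert function of `S/I` in degree `t`: the dimension over `K` of the image of the
space of homogeneous polynomials of degree `t` in the quotient `S/I`. -/
noncomputable def hilb {K : Type*} [Field K] {σ : Type*} (I : Ideal (MvPolynomial σ K)) (t : ℕ) : ℕ :=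
  Module.finrank K
    ((homogeneousSubmodule σ K t).map (Ideal.Quotient.mkₐ K I).toLinearMap)

/-- The ideal generated by the degree-`n` component of `I`, i.e. by all homogeneous elements of
`I` of degree `n`.  Its zero locus is the base locus of the linear system `[I]_n`. -/
noncomputable def compIdeal {K : Type*} [Field K] {σ : Type*} (I : Ideal (MvPolynomial σ K)) (n : ℕ) :
    Ideal (MvPolynomial σ K) :=
  Ideal.span ((I : Set (MvPolynomial σ K)) ∩ (homogeneousSubmodule σ K n : Set (MvPolynomial σ K)))

/-- The first difference of the Hilbert function of `R/I`; for the saturated ideal of a finite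
set of points this is the `h`-vector, i.e. the Hilbert function of an artinian reduction by a
general linear form. -/
noncomputable def hvec {K : Type*} [Field K] {σ : Type*} (I : Ideal (MvPolynomial σ K)) : ℕ → ℕ
  | 0 => hilb I 0
  | t + 1 => hilb I (t + 1) - hilb I t

/-- The saturated homogeneous ideal of a (finite) set of points of `ℙ^{m-1}`, the points being
given by (nonzero) representative vectors: a polynomial lies in this ideal iff it vanishes at
every scalar multiple of every representative, i.e. iff all of its homogeneous components vanish
at the corresponding projective points. -/
noncomputable def pointsIdeal {K : Type*} [Field K] {m : ℕ} (Z : Set (Fin m → K)) :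
    Ideal (MvPolynomial (Fin m) K) :=
  ⨅ v ∈ Z, ⨅ c : K, RingHom.ker (eval (c • v))

/-!
Scale the points so that the linear form `L` takes the value `1` at each of them, and filter the
space `K^Z` of weights by the subspaces `T t` of weights annihilating the values at the points of
all forms of degree less than `t`.  Linear forms act on weights through their values, mapping
`T (t + 1)` into `T t`, and `L` acts as the identity.  The quotient `T t / T (t + 1)` is the degree
`t` part of the inverse system of `J`, so `T (n + 2) = 0`, `dim T (n + 1) = k - 1` and
`dim T n = 2k - 1`.

Basepoint freeness says that the degree `n` part of the inverse system contains no pure vector,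
that is, no power of a linear form.  By an eigenvector argument a space `W` without pure vectors
gains at least one dimension when it is multiplied by the linear forms, as long as the result has
dimension at most its degree.  Hence `W = T (n + 1)` gains exactly one dimension inside
`T n / T (n + 1)`, and descending along an exact Koszul complex one finds a vector of `W` with at
most two-dimensional multiples; this forces the linear forms annihilating `W` to have codimension
at most `2`.  Such a form maps `T (n + 1)` to itself, and since subspaces of `T (n + 1)` more than
double when multiplied by the linear forms, it acts there as a scalar; subtracting a multiple of
`L` makes it act as zero.

So there is a space of linear forms of codimension at most `3`, cutting out at most a plane, that
kills `T (n + 1)` and all its multiples.  Weights in these multiples are supported on the points in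
the plane, so it remains to bound from below the dimension of the `(n + 1)`-st multiple of
`T (n + 1)`, which is done degree by degree with the same growth estimates.
-/

open Module (finrank)
open LinearMap (ker)

section LinearAlgebra

variable {K E F : Type*} [Field K] [AddCommGroup E] [Module K E] [AddCommGroup F] [Module K F]

theorem finrank_map_add_finrank_inf_ker (f : E →ₗ[K] F) (V : Submodule K E)
    [FiniteDimensional K V] :
    finrank K (V.map f) + finrank K (V ⊓ ker f : Submodule K E) = finrank K V := by
  rw [← LinearMap.finrank_range_add_finrank_ker (f.domRestrict V), LinearMap.range_domRestrict,
    LinearMap.ker_domRestrict, ← Submodule.map_comap_subtype,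
    (Submodule.equivSubtypeMap V _).finrank_eq]

theorem finrank_map_of_disjoint_ker {f : E →ₗ[K] F} {V : Submodule K E}
    (h : Disjoint V (ker f)) : finrank K (V.map f) = finrank K V := by
  rw [← LinearMap.range_domRestrict]
  exact LinearMap.finrank_range_of_inj (LinearMap.injective_domRestrict_iff.2 h)

theorem exists_le_finrank_eq {V : Submodule K E} {s : ℕ} (h : s ≤ finrank K V) :
    ∃ U ≤ V, finrank K U = s := by
  obtain ⟨v, hv⟩ := exists_linearIndependent_of_le_finrank h
  refine ⟨(Submodule.span K (Set.range v)).map V.subtype, V.map_subtype_le _, ?_⟩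
  rw [Submodule.finrank_map_subtype_eq, finrank_span_eq_card hv, Fintype.card_fin]

theorem finrank_le_ncard_of_forall_notMem_eq_zero {ι : Type*} [Finite ι]
    {A : Submodule K (ι → K)} {Y : Set ι} (h : ∀ u ∈ A, ∀ i ∉ Y, u i = 0) :
    finrank K A ≤ Y.ncard := by
  classical
  have := Fintype.ofFinite ι
  have hinj : Disjoint A (ker (LinearMap.funLeft K K ((↑) : Y → ι))) := by
    refine LinearMap.disjoint_ker.2 fun u hu h0 => funext fun i => ?_
    by_cases hi : i ∈ Y
    · exact congr_fun h0 ⟨i, hi⟩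
    · exact h u hu i hi
  rw [← finrank_map_of_disjoint_ker hinj, ← Nat.card_coe_set_eq, Nat.card_eq_fintype_card,
    ← Module.finrank_fintype_fun_eq_card K]
  exact Submodule.finrank_le _

theorem exists_leftInverse_of_disjoint_ker {f : E →ₗ[K] F} {V : Submodule K E}
    (h : Disjoint V (ker f)) : ∃ p : F →ₗ[K] V, ∀ v : V, p (f v) = v := by
  obtain ⟨p, hp⟩ := (f.domRestrict V).exists_leftInverse_of_injective
    (LinearMap.ker_eq_bot.2 (LinearMap.injective_domRestrict_iff.2 h))
  exact ⟨p, LinearMap.congr_fun hp⟩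

theorem exists_not_disjoint_ker_sub_smul [IsAlgClosed K] {f g : E →ₗ[K] F} {W : Submodule K E}
    [FiniteDimensional K W] (hW : W ≠ ⊥) (h : W.map f ≤ W.map g) :
    ∃ c : K, ¬ Disjoint W (ker (f - c • g)) := by
  have := Submodule.nontrivial_iff_ne_bot.2 hW
  obtain ⟨s, hs⟩ := (g.submoduleMap W).exists_rightInverse_of_surjective
    (LinearMap.range_eq_top.2 (g.submoduleMap_surjective W))
  obtain ⟨c, hc⟩ := Module.End.exists_eigenvalue (s ∘ₗ Submodule.inclusion h ∘ₗ f.submoduleMap W)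
  obtain ⟨w, hw⟩ := hc.exists_hasEigenvector
  have hfw : f w = c • g w := by
    have hgs := congrArg Subtype.val
      (LinearMap.congr_fun hs (Submodule.inclusion h (f.submoduleMap W w)))
    have hsw := congrArg (fun u : W => g u) hw.apply_eq_smul
    exact hgs.symm.trans (hsw.trans (map_smul g c _))
  refine ⟨c, fun hdisj => hw.2 (Subtype.ext ?_)⟩
  exact LinearMap.disjoint_ker.1 hdisj w w.2 (by simp [hfw])

theorem not_map_le_map_of_pencil [IsAlgClosed K] {f g : E →ₗ[K] F} {U V : Submodule K E}
    [FiniteDimensional K U] (h : ∀ c : K, Disjoint V (ker (f - c • g))) (hU : U ≤ V)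
    (hU0 : U ≠ ⊥) : ¬ U.map f ≤ U.map g := fun hle =>
  let ⟨c, hc⟩ := exists_not_disjoint_ker_sub_smul hU0 hle
  hc ((h c).mono_left hU)

theorem finite_setOf_not_disjoint_ker_add_smul (f : E →ₗ[K] F) {g : E →ₗ[K] F}
    {V : Submodule K E} [FiniteDimensional K V] (hg : Disjoint V (ker g)) :
    {t : K | ¬ Disjoint V (ker (f + t • g))}.Finite := by
  obtain ⟨p, hp⟩ := exists_leftInverse_of_disjoint_ker hg
  refine ((Module.End.finite_hasEigenvalue (p ∘ₗ f.domRestrict V)).preimage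
    neg_injective.injOn).subset fun t ht => ?_
  simp only [LinearMap.disjoint_ker, not_forall] at ht
  obtain ⟨v, hv, hfv, hv0⟩ := ht
  have hfv : f v = -t • g v := by
    rw [neg_smul]
    exact eq_neg_of_add_eq_zero_left hfv
  refine Module.End.hasEigenvalue_of_hasEigenvector (x := ⟨v, hv⟩)
    ⟨Module.End.mem_eigenspace_iff.2 ?_, fun h => hv0 (congrArg Subtype.val h)⟩
  simp [hfv, hp ⟨v, hv⟩]

theorem exists_disjoint_ker_add_smul [Infinite K] {f g : E →ₗ[K] F} {A B : Submodule K E}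
    [FiniteDimensional K A] [FiniteDimensional K B] (hA : Disjoint A (ker f))
    (hB : Disjoint B (ker g)) :
    ∃ t : K, Disjoint A (ker (g + t • f)) ∧ Disjoint B (ker (g + t • f)) := by
  obtain ⟨t, ht⟩ := (((finite_setOf_not_disjoint_ker_add_smul g hA).union
    ((finite_setOf_not_disjoint_ker_add_smul f hB).preimage
      (inv_injective (G := K)).injOn)).union (Set.finite_singleton 0)).exists_notMem
  simp only [Set.mem_union, Set.mem_ofPred_eq, Set.mem_preimage, Set.mem_singleton_iff, not_or,
    not_not] at ht
  obtain ⟨⟨htA, htB⟩, ht0⟩ := ht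
  refine ⟨t, htA, ?_⟩
  rwa [← LinearMap.ker_smul _ t ht0, smul_add, smul_inv_smul₀ ht0, add_comm] at htB

theorem exists_common_eigenvector_of_commute [IsAlgClosed K] [FiniteDimensional K E] [Nontrivial E]
    {ι : Type*} {T : ι → Module.End K E} (hT : ∀ i j, Commute (T i) (T j)) :
    ∃ v ≠ 0, ∀ i, ∃ c : K, T i v = c • v := by
  obtain ⟨U, ⟨hU, hUT⟩, hmin⟩ := exists_minimal_of_wellFoundedLT
    (fun U : Submodule K E => U ≠ ⊥ ∧ ∀ i, ∀ u ∈ U, T i u ∈ U) ⟨⊤, by simp⟩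
  obtain ⟨u, hu, hu0⟩ := U.exists_mem_ne_zero_of_ne_bot hU
  refine ⟨u, hu0, fun i => ?_⟩
  have := Submodule.nontrivial_iff_ne_bot.2 hU
  obtain ⟨c, hc⟩ := Module.End.exists_eigenvalue ((T i).restrict (hUT i))
  obtain ⟨w, hw⟩ := hc.exists_hasEigenvector
  have hwc : T i w = c • w := congrArg Subtype.val hw.apply_eq_smul
  refine ⟨c, ?_⟩
  have hle : U ≤ U ⊓ (T i).eigenspace c := hmin ⟨?_, fun j v hv => ⟨hUT j v hv.1, ?_⟩⟩ inf_le_left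
  · exact Module.End.mem_eigenspace_iff.1 (hle hu).2
  · exact (Submodule.ne_bot_iff _).2
      ⟨w, ⟨w.2, Module.End.mem_eigenspace_iff.2 hwc⟩, fun h => hw.2 (Subtype.ext h)⟩
  · rw [SetLike.mem_coe, Module.End.mem_eigenspace_iff, ← Module.End.mul_apply, (hT i j).eq,
      Module.End.mul_apply, Module.End.mem_eigenspace_iff.1 hv.2, map_smul]

/-- Exactness in the middle of the Koszul complex `W → V × V → E` of two commuting operators. -/
theorem exists_apply_eq_of_commute {f g : Module.End K E} (hfg : Commute f g)
    {V W : Submodule K E} [FiniteDimensional K V] (hfW : W.map f ≤ V) (hgW : W.map g ≤ V)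
    (hdim : finrank K V ≤ finrank K W + 1) (hfWker : Disjoint W (ker f))
    (hfVker : Disjoint V (ker f)) (hgf : ¬ V.map g ≤ V.map f) {v v' : E} (hv : v ∈ V)
    (hv' : v' ∈ V) (h : f v = g v') : ∃ w ∈ W, v = g w ∧ v' = f w := by
  have hlt : V ⊓ (V.map f).comap g < V :=
    inf_le_left.lt_of_ne fun heq => hgf (Submodule.map_le_iff_le_comap.2 (inf_eq_left.1 heq))
  have hle : W.map f ≤ V ⊓ (V.map f).comap g := by
    refine le_inf hfW ?_
    rintro _ ⟨w, hw, rfl⟩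
    rw [Submodule.mem_comap, ← Module.End.mul_apply, ← hfg.eq, Module.End.mul_apply]
    exact Submodule.mem_map_of_mem (hgW (Submodule.mem_map_of_mem hw))
  have heq : W.map f = V ⊓ (V.map f).comap g :=
    Submodule.eq_of_le_of_finrank_le hle <| Nat.lt_succ_iff.1 <|
      (Submodule.finrank_lt_finrank_of_lt hlt).trans_le <|
        hdim.trans_eq (by rw [finrank_map_of_disjoint_ker hfWker])
  obtain ⟨w, hw, rfl⟩ : v' ∈ W.map f := heq ▸ ⟨hv', v, hv, h⟩
  refine ⟨w, hw, ?_, rfl⟩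
  refine LinearMap.disjoint_ker_iff_injOn.1 hfVker hv (hgW (Submodule.mem_map_of_mem hw)) ?_
  rw [h, ← Module.End.mul_apply, ← Module.End.mul_apply, hfg.eq]

end LinearAlgebra

section InverseSystem

variable {K X E : Type*} [Field K] [AddCommGroup X] [Module K X] [AddCommGroup E] [Module K E]

/-- The space `X · W` spanned by the elements `x · w` with `x ∈ X` and `w ∈ W`, where the
bilinear map `act` is read as a multiplication of vectors in `E` by linear forms in `X`. -/
def linearMultiples (act : X →ₗ[K] E →ₗ[K] E) (W : Submodule K E) : Submodule K E :=
  Submodule.map₂ act ⊤ W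

/-- A vector is pure if it is a common eigenvector of all ratios `x / l`, for some `l`.  The pure
elements of Macaulay's inverse system are the powers of linear forms, that is, the points. -/
def IsPure (act : X →ₗ[K] E →ₗ[K] E) (w : E) : Prop :=
  w ≠ 0 ∧ ∃ l, ∀ x, ∃ c : K, act x w = c • act l w

/-- A subspace without pure vectors: the counterpart of basepoint freeness for the system of
forms annihilated by `V`. -/
def PureFree (act : X →ₗ[K] E →ₗ[K] E) (V : Submodule K E) : Prop :=
  ∀ v ∈ V, ¬ IsPure act v

/-- The space of all `x ∈ X` with `x · W = 0`. -/
def annihilatorOn (act : X →ₗ[K] E →ₗ[K] E) (W : Submodule K E) : Submodule K X :=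
  ker (act.domRestrict₂ W)

/-- `F` absorbs `X · w`, for `w ∈ W`, as soon as it contains the single vector `m · w`. -/
def IsAbsorbing (act : X →ₗ[K] E →ₗ[K] E) (W : Submodule K E) (m : X) (F : Submodule K E) : Prop :=
  ∀ w ∈ W, act m w ∈ F → ∀ x, act x w ∈ F

variable {act : X →ₗ[K] E →ₗ[K] E} {V W : Submodule K E}

theorem apply_mem_linearMultiples (x : X) {w : E} (hw : w ∈ W) : act x w ∈ linearMultiples act W :=
  Submodule.apply_mem_map₂ act trivial hw

theorem linearMultiples_le_iff : linearMultiples act W ≤ V ↔ ∀ x, ∀ w ∈ W, act x w ∈ V := by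
  simp [linearMultiples, Submodule.map₂_le]

theorem map_le_linearMultiples (x : X) : W.map (act x) ≤ linearMultiples act W :=
  Submodule.map_le_iff_le_comap.2 fun _ => apply_mem_linearMultiples x

instance [FiniteDimensional K X] [FiniteDimensional K W] :
    FiniteDimensional K (linearMultiples act W) :=
  Module.Finite.iff_fg.2 (Module.Finite.fg_top.map₂ act (Module.Finite.iff_fg.1 ‹_›))

theorem linearMultiples_inf_ker_le (comm : ∀ x y v, act x (act y v) = act y (act x v)) (x : X) :
    linearMultiples act (W ⊓ ker (act x)) ≤ linearMultiples act W ⊓ ker (act x) := by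
  refine linearMultiples_le_iff.2 fun y w hw => ⟨apply_mem_linearMultiples y hw.1, ?_⟩
  rw [SetLike.mem_coe, LinearMap.mem_ker, comm, LinearMap.mem_ker.1 hw.2, map_zero]

theorem linearMultiples_map_le (comm : ∀ x y v, act x (act y v) = act y (act x v)) (x : X) :
    linearMultiples act (W.map (act x)) ≤ (linearMultiples act W).map (act x) := by
  rw [linearMultiples_le_iff]
  rintro y _ ⟨w, hw, rfl⟩
  rw [comm]
  exact Submodule.mem_map_of_mem (apply_mem_linearMultiples y hw)

theorem mem_annihilatorOn {x : X} : x ∈ annihilatorOn act W ↔ W.map (act x) = ⊥ := by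
  rw [← LinearMap.le_ker_iff_map]
  exact LinearMap.ext_iff.trans Subtype.forall

theorem annihilatorOn_le_annihilatorOn_iterate
    (comm : ∀ x y v, act x (act y v) = act y (act x v)) (j : ℕ) :
    annihilatorOn act W ≤ annihilatorOn act ((linearMultiples act)^[j] W) := by
  induction j generalizing W with
  | zero => exact le_rfl
  | succ j ih =>
    refine le_trans (fun x hx => ?_) ih
    rw [mem_annihilatorOn, ← LinearMap.le_ker_iff_map] at hx ⊢
    refine linearMultiples_le_iff.2 fun y w hw => ?_
    rw [LinearMap.mem_ker, comm, LinearMap.mem_ker.1 (hx hw), map_zero]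

theorem PureFree.mono (hV : PureFree act V) (h : W ≤ V) : PureFree act W :=
  fun w hw => hV w (h hw)

theorem exists_isPure [IsAlgClosed K] (comm : ∀ x y v, act x (act y v) = act y (act x v))
    [FiniteDimensional K W] (hW : W ≠ ⊥) {l : X} (hl : Disjoint W (ker (act l)))
    (hl' : Disjoint (W.map (act l)) (ker (act l))) (h : linearMultiples act W ≤ W.map (act l)) :
    ∃ w ∈ W, IsPure act w := by
  obtain ⟨p, hp⟩ := exists_leftInverse_of_disjoint_ker hl
  have act_p : ∀ x, ∀ w : W, act l (p (act x w)) = act x w := by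
    intro x w
    obtain ⟨w', hw', hxw⟩ := h (apply_mem_linearMultiples x w.2)
    rw [← hxw, hp ⟨w', hw'⟩]
  let T (x : X) : Module.End K W := p ∘ₗ (act x).domRestrict W
  have act_T : ∀ x (w : W), act l (T x w) = act x w := act_p
  have act_act_T : ∀ x y w, act l (act l (T x (T y w))) = act x (act y w) := fun x y w => by
    rw [act_T, comm, act_T]
  have T_comm : ∀ x y, Commute (T x) (T y) := by
    refine fun x y => LinearMap.ext fun w => Subtype.ext ?_
    refine LinearMap.disjoint_ker_iff_injOn.1 hl (T x (T y w)).2 (T y (T x w)).2 ?_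
    refine LinearMap.disjoint_ker_iff_injOn.1 hl' (Submodule.mem_map_of_mem (Subtype.prop _))
      (Submodule.mem_map_of_mem (Subtype.prop _)) ?_
    exact (act_act_T x y w).trans ((comm x y w).trans (act_act_T y x w).symm)
  have := Submodule.nontrivial_iff_ne_bot.2 hW
  obtain ⟨w, hw0, hw⟩ := exists_common_eigenvector_of_commute T_comm
  refine ⟨w, w.2, fun h0 => hw0 (Subtype.ext h0), l, fun x => ?_⟩
  obtain ⟨c, hc⟩ := hw x
  exact ⟨c, by rw [← act_T, hc, Submodule.coe_smul, map_smul]⟩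

instance [FiniteDimensional K X] [FiniteDimensional K W] (j : ℕ) :
    FiniteDimensional K ↥((linearMultiples act)^[j] W) := by
  induction j with
  | zero => assumption
  | succ j ih => rw [Function.iterate_succ_apply']; infer_instance

/-- Otherwise the kernel and the image of `y` on `R`, whose dimensions add up to that of `R`, would
each more than double, and `X · R` would have dimension at least `2 dim R + 2`. -/
theorem map_eq_bot_of_not_disjoint_ker (comm : ∀ x y v, act x (act y v) = act y (act x v))
    [FiniteDimensional K X] {R : Submodule K E} [FiniteDimensional K R]
    (hgrow : ∀ B ≤ R, B ≠ ⊥ → 2 * finrank K B + 1 ≤ finrank K (linearMultiples act B))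
    (hR : finrank K (linearMultiples act R) ≤ 2 * finrank K R + 1) {y : X}
    (hyR : R.map (act y) ≤ R) (hy : ¬ Disjoint R (ker (act y))) : R.map (act y) = ⊥ := by
  by_contra himage
  have hdim := finrank_map_add_finrank_inf_ker (act y) R
  have hdim' := finrank_map_add_finrank_inf_ker (act y) (linearMultiples act R)
  have h₁ := hgrow _ inf_le_left (disjoint_iff.not.1 hy)
  have h₂ := hgrow _ hyR himage
  have h₃ := Submodule.finrank_mono (linearMultiples_inf_ker_le comm (W := R) y)
  have h₄ := Submodule.finrank_mono (linearMultiples_map_le comm (W := R) y)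
  lia

/-- An abstract inverse system: a graded module `D` over a polynomial ring, on which linear forms
act by commuting operators of degree `-1` with no common kernel in positive degrees. -/
structure IsInverseSystem (act : X →ₗ[K] E →ₗ[K] E) (D : ℕ → Submodule K E) : Prop where
  comm : ∀ x y v, act x (act y v) = act y (act x v)
  mapsTo : ∀ x t, ∀ v ∈ D (t + 1), act x v ∈ D t
  eq_zero : ∀ t, ∀ v ∈ D (t + 1), (∀ x, act x v = 0) → v = 0

namespace IsInverseSystem

variable {D : ℕ → Submodule K E} (hD : IsInverseSystem act D) {d : ℕ}

include hD

theorem map_le (hV : V ≤ D (d + 1)) (x : X) : V.map (act x) ≤ D d :=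
  Submodule.map_le_iff_le_comap.2 fun v hv => hD.mapsTo x d v (hV hv)

theorem linearMultiples_le (hV : V ≤ D (d + 1)) : linearMultiples act V ≤ D d :=
  linearMultiples_le_iff.2 fun x v hv => hD.mapsTo x d v (hV hv)

theorem linearMultiples_ne_bot (hV : V ≤ D (d + 1)) (h : V ≠ ⊥) : linearMultiples act V ≠ ⊥ := by
  obtain ⟨v, hv, hv0⟩ := V.exists_mem_ne_zero_of_ne_bot h
  refine fun hbot => hv0 (hD.eq_zero d v (hV hv) fun x => (Submodule.mem_bot K).1 ?_)
  exact hbot ▸ apply_mem_linearMultiples x hv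

theorem disjoint_ker_of_linearMultiples (hW : W ≤ D (d + 1)) {x : X}
    (h : Disjoint (linearMultiples act W) (ker (act x))) : Disjoint W (ker (act x)) := by
  refine LinearMap.disjoint_ker.2 fun w hw hxw => hD.eq_zero d w (hW hw) fun y => ?_
  refine LinearMap.disjoint_ker.1 h _ (apply_mem_linearMultiples y hw) ?_
  rw [hD.comm, hxw, map_zero]

theorem exists_disjoint_ker [Infinite K] {d : ℕ} {V : Submodule K E} [FiniteDimensional K V]
    (hV : V ≤ D d) (h : finrank K V ≤ d) : ∃ x, Disjoint V (ker (act x)) := by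
  induction hs : finrank K V using Nat.strong_induction_on generalizing d V with
  | _ s ih =>
    subst hs
    by_cases hV0 : V = ⊥
    · exact ⟨0, hV0 ▸ disjoint_bot_left⟩
    obtain ⟨v, hv, hv0⟩ := V.exists_mem_ne_zero_of_ne_bot hV0
    obtain ⟨e, rfl⟩ : ∃ e, d = e + 1 :=
      Nat.exists_eq_add_one.2 ((Submodule.one_le_finrank_iff.2 hV0).trans h)
    obtain ⟨x, hx⟩ : ∃ x, act x v ≠ 0 := by
      by_contra! hcon
      exact hv0 (hD.eq_zero e v (hV hv) hcon)
    by_cases hVx : Disjoint V (ker (act x))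
    · exact ⟨x, hVx⟩
    have hdim := finrank_map_add_finrank_inf_ker (act x) V
    have hker : 1 ≤ finrank K ↥(V ⊓ ker (act x)) :=
      Submodule.one_le_finrank_iff.2 (disjoint_iff.not.1 hVx)
    have himage : 1 ≤ finrank K (V.map (act x)) := Submodule.one_le_finrank_iff.2 fun hbot =>
      hx ((Submodule.mem_bot K).1 (hbot ▸ Submodule.mem_map_of_mem hv))
    obtain ⟨y, hy⟩ := ih (finrank K ↥(V ⊓ ker (act x))) (by lia) (inf_le_left.trans hV) (by lia) rfl
    obtain ⟨z, hz⟩ := ih (finrank K (V.map (act x))) (by lia) (hD.map_le hV x) (by lia) rfl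
    obtain ⟨t, ht, ht'⟩ := exists_disjoint_ker_add_smul hy hz
    refine ⟨z + t • y, LinearMap.disjoint_ker.2 fun w hw hw0 => ?_⟩
    rw [← map_smul, ← map_add] at ht ht'
    have hxw : act x w = 0 := LinearMap.disjoint_ker.1 ht' _ (Submodule.mem_map_of_mem hw)
      (by rw [hD.comm, hw0, map_zero])
    exact LinearMap.disjoint_ker.1 ht w ⟨hw, hxw⟩ hw0

theorem min_finrank_le_finrank_linearMultiples [Infinite K] [FiniteDimensional K X]
    [FiniteDimensional K W] (hW : W ≤ D d) :
    min (finrank K W) d ≤ finrank K (linearMultiples act W) := by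
  obtain ⟨U, hUW, hU⟩ := exists_le_finrank_eq (min_le_left (finrank K W) d)
  have := Submodule.finiteDimensional_of_le hUW
  obtain ⟨x, hx⟩ := hD.exists_disjoint_ker (hUW.trans hW) (hU ▸ min_le_right _ _)
  rw [← hU, ← finrank_map_of_disjoint_ker hx]
  exact Submodule.finrank_mono ((Submodule.map_mono hUW).trans (map_le_linearMultiples x))

theorem finrank_lt_finrank_linearMultiples [IsAlgClosed K] [FiniteDimensional K X]
    [FiniteDimensional K W] (hW : W ≤ D (d + 1)) (hW0 : W ≠ ⊥) (hpure : PureFree act W)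
    (h : finrank K (linearMultiples act W) ≤ d) :
    finrank K W < finrank K (linearMultiples act W) := by
  have : Infinite K := IsAlgClosed.instInfinite
  obtain ⟨l, hl⟩ := hD.exists_disjoint_ker (hD.linearMultiples_le hW) h
  have hlW := hD.disjoint_ker_of_linearMultiples hW hl
  by_contra! hle
  have heq : W.map (act l) = linearMultiples act W :=
    Submodule.eq_of_le_of_finrank_le (map_le_linearMultiples l)
      (hle.trans (finrank_map_of_disjoint_ker hlW).ge)
  obtain ⟨w, hw, hw'⟩ := exists_isPure hD.comm hW0 hlW (heq ▸ hl) heq.ge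
  exact hpure w hw hw'

theorem pureFree_of_linearMultiples (hW : W ≤ D (d + 1))
    (hpure : PureFree act (linearMultiples act W)) : PureFree act W := by
  rintro w hw ⟨hw0, l, hl⟩
  refine hpure (act l w) (apply_mem_linearMultiples l hw) ⟨fun h => ?_, l, fun x => ?_⟩
  · refine hw0 (hD.eq_zero d w (hW hw) fun x => ?_)
    obtain ⟨c, hc⟩ := hl x
    rw [hc, h, smul_zero]
  · obtain ⟨c, hc⟩ := hl x
    exact ⟨c, by rw [hD.comm, hc, map_smul]⟩

theorem min_finrank_add_one_le_finrank_linearMultiples [IsAlgClosed K] [FiniteDimensional K X]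
    [FiniteDimensional K W] (hW : W ≤ D (d + 1)) (hW0 : W ≠ ⊥) (hpure : PureFree act W) :
    min (finrank K W + 1) (d + 1) ≤ finrank K (linearMultiples act W) := by
  by_cases h : finrank K (linearMultiples act W) ≤ d
  · exact (min_le_left _ _).trans (hD.finrank_lt_finrank_linearMultiples hW hW0 hpure h)
  · exact (min_le_right _ _).trans (not_le.1 h)

theorem disjoint_ker_of_map_ne_bot [IsAlgClosed K] [FiniteDimensional K X]
    [FiniteDimensional K W] (hW : W ≤ D (d + 1)) (hpure : PureFree act (linearMultiples act W))
    (hdim : finrank K (linearMultiples act W) = finrank K W + 1) (hd : finrank K W + 1 ≤ d)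
    {x : X} (hx : W.map (act x) ≠ ⊥) : Disjoint (linearMultiples act W) (ker (act x)) := by
  obtain ⟨e, rfl⟩ : ∃ e, d = e + 1 := Nat.exists_eq_add_one.2 (by lia)
  by_contra hV
  have hVker := Submodule.one_le_finrank_iff.2 (disjoint_iff.not.1 hV)
  have hVdim := finrank_map_add_finrank_inf_ker (act x) (linearMultiples act W)
  have hWdim := finrank_map_add_finrank_inf_ker (act x) W
  have hle := Submodule.finrank_mono (linearMultiples_map_le hD.comm (W := W) x)
  have himage : finrank K (W.map (act x)) < finrank K ((linearMultiples act W).map (act x)) :=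
    (hD.finrank_lt_finrank_linearMultiples (hD.map_le hW x) hx
      (hpure.mono (map_le_linearMultiples x)) (by lia)).trans_le hle
  by_cases hWx : W ⊓ ker (act x) = ⊥
  · rw [hWx, finrank_bot] at hWdim
    lia
  · have hle' := Submodule.finrank_mono (linearMultiples_inf_ker_le hD.comm (W := W) x)
    have := hD.finrank_lt_finrank_linearMultiples (inf_le_left.trans hW) hWx
      ((hD.pureFree_of_linearMultiples hW hpure).mono inf_le_left) (by lia)
    lia

theorem commute_act (x y : X) : Commute (act x : Module.End K E) (act y) :=
  LinearMap.ext (hD.comm x y)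

section Pencil

variable [IsAlgClosed K] [FiniteDimensional K X] [FiniteDimensional K W] (hW : W ≤ D (d + 1))
  (hdim : finrank K (linearMultiples act W) = finrank K W + 1) {l m : X}
  (hl : Disjoint (linearMultiples act W) (ker (act l)))
  (hpencil : ∀ c : K, Disjoint (linearMultiples act W) (ker (act (m - c • l))))

include hW hdim hpencil

omit [IsAlgClosed K] in
theorem finrank_le_finrank_inf_comap_add_one {F : Submodule K E} (hF : F ≤ linearMultiples act W) :
    finrank K F ≤ finrank K ↥(W ⊓ F.comap (act m)) + 1 := by
  have hmW : Disjoint W (ker (act m)) :=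
    hD.disjoint_ker_of_linearMultiples hW (by simpa using hpencil 0)
  have hmap : (W ⊓ F.comap (act m)).map (act m) = W.map (act m) ⊓ F :=
    SetLike.coe_injective (by simpa using Set.image_inter_preimage (act m) W F)
  have := Submodule.finiteDimensional_of_le hF
  have hsup := Submodule.finrank_mono (sup_le (map_le_linearMultiples (W := W) m) hF)
  have hmod := Submodule.finrank_sup_add_finrank_inf_eq (W.map (act m)) F
  rw [← hmap, finrank_map_of_disjoint_ker (hmW.mono_left inf_le_left),
    finrank_map_of_disjoint_ker hmW] at hmod
  lia

include hl

/-- Exactness of the Koszul complex of `l, m` makes absorption descend. -/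
theorem isAbsorbing_map_inf_comap {F : Submodule K E} (hF : IsAbsorbing act W m F)
    (hW0 : W ≠ ⊥) : IsAbsorbing act W m ((W ⊓ F.comap (act m)).map (act l)) := by
  rintro w hw ⟨w', ⟨hw', hmw'⟩, hlw'⟩ x
  obtain ⟨u, hu, hxw', hxw⟩ := exists_apply_eq_of_commute (hD.commute_act l m)
    (map_le_linearMultiples l) (map_le_linearMultiples m) hdim.le
    (hD.disjoint_ker_of_linearMultiples hW hl) hl
    (not_map_le_map_of_pencil (by simpa using hpencil) le_rfl
      (hD.linearMultiples_ne_bot hW hW0))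
    (apply_mem_linearMultiples x hw') (apply_mem_linearMultiples x hw)
    (by rw [hD.comm, hlw', hD.comm])
  rw [hxw]
  refine Submodule.mem_map_of_mem ⟨hu, ?_⟩
  change act m u ∈ F
  exact hxw' ▸ hF w' hw' hmw' x

theorem finrank_map_inf_comap_add_one {F : Submodule K E} (hF : IsAbsorbing act W m F)
    (hFV : F ≤ linearMultiples act W) (hF2 : 2 ≤ finrank K F) :
    finrank K ((W ⊓ F.comap (act m)).map (act l)) + 1 = finrank K F := by
  have hle := hD.finrank_le_finrank_inf_comap_add_one hW hdim hpencil hFV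
  have := Submodule.finiteDimensional_of_le hFV
  have hA0 : W ⊓ F.comap (act m) ≠ ⊥ := Submodule.one_le_finrank_iff.1 (by lia)
  have hlt : (W ⊓ F.comap (act m)).map (act l) < F := by
    refine lt_of_le_of_ne (Submodule.map_le_iff_le_comap.2 fun w hw => hF w hw.1 hw.2 l) ?_
    intro heq
    refine not_map_le_map_of_pencil (g := act l) (fun c => ?_) inf_le_left hA0
      ((Submodule.map_le_iff_le_comap.2 inf_le_right).trans heq.ge)
    have := hD.disjoint_ker_of_linearMultiples hW (hpencil c)
    rwa [map_sub, map_smul] at this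
  have hAl := finrank_map_of_disjoint_ker (V := W ⊓ F.comap (act m))
    ((hD.disjoint_ker_of_linearMultiples hW hl).mono_left inf_le_left)
  have := Submodule.finrank_lt_finrank_of_lt hlt
  lia

theorem exists_finrank_range_flip_le_two (hW0 : W ≠ ⊥) :
    ∃ w ∈ W, w ≠ 0 ∧ finrank K (LinearMap.range (act.flip w)) ≤ 2 := by
  have descent : ∀ s, ∀ F ≤ linearMultiples act W, IsAbsorbing act W m F → finrank K F = s + 2 →
      ∃ F ≤ linearMultiples act W, IsAbsorbing act W m F ∧ finrank K F = 2 := by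
    intro s
    induction s with
    | zero => exact fun F hFV hF hF2 => ⟨F, hFV, hF, hF2⟩
    | succ s ih =>
      intro F hFV hF hFs
      have := hD.finrank_map_inf_comap_add_one hW hdim hl hpencil hF hFV (by lia)
      exact ih _ ((Submodule.map_mono inf_le_left).trans (map_le_linearMultiples l))
        (hD.isAbsorbing_map_inf_comap hW hdim hl hpencil hF hW0) (by lia)
  have hW1 := Submodule.one_le_finrank_iff.2 hW0
  obtain ⟨F, hFV, hF, hF2⟩ := descent (finrank K W - 1) _ le_rfl
    (fun w hw _ x => apply_mem_linearMultiples x hw) (by lia)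
  have hle := hD.finrank_le_finrank_inf_comap_add_one hW hdim hpencil hFV
  obtain ⟨w, ⟨hw, hmw⟩, hw0⟩ := Submodule.exists_mem_ne_zero_of_ne_bot
    (Submodule.one_le_finrank_iff.1 (by lia : 1 ≤ finrank K ↥(W ⊓ F.comap (act m))))
  have := Submodule.finiteDimensional_of_le hFV
  refine ⟨w, hw, hw0, (Submodule.finrank_mono ?_).trans hF2.le⟩
  rintro _ ⟨x, rfl⟩
  exact hF w hw hmw x

end Pencil

theorem finrank_le_finrank_annihilatorOn_add_two [IsAlgClosed K] [FiniteDimensional K X]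
    [FiniteDimensional K W] (hW : W ≤ D (d + 1)) (hW0 : W ≠ ⊥)
    (hpure : PureFree act (linearMultiples act W))
    (hdim : finrank K (linearMultiples act W) = finrank K W + 1) (hd : finrank K W + 1 ≤ d) :
    finrank K X ≤ finrank K (annihilatorOn act W) + 2 := by
  set N := annihilatorOn act W
  have disjoint_of_notMem : ∀ x ∉ N, Disjoint (linearMultiples act W) (ker (act x)) :=
    fun x hx => hD.disjoint_ker_of_map_ne_bot hW hpure hdim hd (mem_annihilatorOn.not.1 hx)
  by_contra! hlt
  obtain ⟨l, hl⟩ : ∃ l, l ∉ N := by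
    by_contra! hN
    rw [Submodule.eq_top_iff'.2 hN, finrank_top] at hlt
    lia
  obtain ⟨m, hm⟩ : ∃ m, m ∉ N ⊔ K ∙ l := by
    by_contra! hN
    have := Submodule.finrank_add_le_finrank_add_finrank N (K ∙ l)
    rw [Submodule.eq_top_iff'.2 hN, finrank_top] at this
    have := finrank_span_singleton (K := K) (ne_of_mem_of_not_mem N.zero_mem hl).symm
    lia
  have hpencil : ∀ c : K, m - c • l ∉ N := fun c hc => hm <|
    sub_add_cancel m (c • l) ▸ add_mem (Submodule.mem_sup_left hc)
      (Submodule.mem_sup_right (Submodule.smul_mem _ c (Submodule.mem_span_singleton_self l)))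
  obtain ⟨w, hw, hw0, hrank⟩ := hD.exists_finrank_range_flip_le_two hW hdim
    (disjoint_of_notMem l hl) (fun c => disjoint_of_notMem _ (hpencil c)) hW0
  have hker : ker (act.flip w) ≤ N := by
    intro x hx
    by_contra hxN
    exact hw0 (LinearMap.disjoint_ker.1
      (hD.disjoint_ker_of_linearMultiples hW (disjoint_of_notMem x hxN)) w hw hx)
  have := LinearMap.finrank_range_add_finrank_ker (act.flip w)
  have := Submodule.finrank_mono hker
  lia

theorem iterate_linearMultiples_le {j : ℕ} (hW : W ≤ D (d + j)) :
    (linearMultiples act)^[j] W ≤ D d := by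
  induction j generalizing W with
  | zero => exact hW
  | succ j ih => exact ih (hD.linearMultiples_le hW)

theorem min_finrank_add_two_le_finrank_iterate [IsAlgClosed K] [FiniteDimensional K X]
    [FiniteDimensional K W] {j : ℕ} (hW : W ≤ D (d + j + 2)) (hW0 : W ≠ ⊥)
    (hpure : PureFree act (linearMultiples act W)) :
    min (finrank K W + 2) (d + 1) ≤ finrank K ((linearMultiples act)^[j + 2] W) := by
  have : Infinite K := IsAlgClosed.instInfinite
  induction j generalizing d with
  | zero =>
    have h₁ := hD.min_finrank_add_one_le_finrank_linearMultiples hW hW0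
      (hD.pureFree_of_linearMultiples hW hpure)
    have h₂ := hD.min_finrank_add_one_le_finrank_linearMultiples (hD.linearMultiples_le hW)
      (hD.linearMultiples_ne_bot hW hW0) hpure
    change _ ≤ finrank K (linearMultiples act (linearMultiples act W))
    lia
  | succ j ih =>
    have h := ih (d := d + 1) (by rwa [add_right_comm d 1 j])
    have hle := hD.min_finrank_le_finrank_linearMultiples (W := (linearMultiples act)^[j + 2] W)
      (hD.iterate_linearMultiples_le (d := d + 1) (j := j + 2) (by convert hW using 2; ring))
    rw [Function.iterate_succ_apply']
    lia

end IsInverseSystem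

end InverseSystem

section Contraction

variable {K σ : Type*} [Field K]

theorem homogeneousComponent_add_mul {e : ℕ} {p : MvPolynomial σ K} (hp : p.IsHomogeneous e)
    (t : ℕ) (f : MvPolynomial σ K) :
    homogeneousComponent (e + t) (p * f) = p * homogeneousComponent t f := by
  let _ := gradedAlgebra (σ := σ) (R := K)
  rw [← decomposition.decompose'_apply, ← decomposition.decompose'_apply]
  exact DirectSum.coe_decompose_mul_add_of_left_mem (homogeneousSubmodule σ K) hp

/-- The functionals on polynomials that factor through the projection to degree `t`: the degree
`t` part of Macaulay's inverse system. -/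
noncomputable def homogeneousDual (K σ : Type*) [Field K] (t : ℕ) :
    Submodule K (Module.Dual K (MvPolynomial σ K)) :=
  LinearMap.eqLocus (homogeneousComponent t).dualMap LinearMap.id

theorem mem_homogeneousDual {t : ℕ} {φ : Module.Dual K (MvPolynomial σ K)} :
    φ ∈ homogeneousDual K σ t ↔ ∀ f, φ (homogeneousComponent t f) = φ f :=
  LinearMap.ext_iff

variable [Fintype σ]

/-- The linear form with a given vector of coefficients. -/
noncomputable def linearForm : (σ → K) →ₗ[K] MvPolynomial σ K :=
  Fintype.linearCombination K X

theorem linearForm_single [DecidableEq σ] (i : σ) :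
    linearForm (Pi.single i (1 : K)) = (X i : MvPolynomial σ K) := by
  rw [linearForm, Fintype.linearCombination_apply_single, one_smul]

theorem eval_linearForm (q x : σ → K) : eval q (linearForm x) = ∑ i, x i * q i := by
  simp [linearForm, Fintype.linearCombination_apply, smul_eval]

theorem linearForm_isHomogeneous (a : σ → K) : (linearForm a).IsHomogeneous 1 :=
  sum_mem (S := homogeneousSubmodule σ K 1) fun i _ =>
    Submodule.smul_mem _ _ (isHomogeneous_X K i)

theorem exists_linearForm_eq {L : MvPolynomial σ K} (hL : L.IsHomogeneous 1) :
    ∃ a, linearForm a = L := by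
  rw [← mem_homogeneousSubmodule, homogeneousSubmodule_one_eq_span_X] at hL
  exact Submodule.mem_span_range_iff_exists_fun K |>.1 hL

theorem linearForm_injective : Function.Injective (linearForm (K := K) (σ := σ)) :=
  linearIndependent_X σ K |>.fintypeLinearCombination_injective

/-- Linear forms act on functionals by `(x · φ) f = φ (x f)`. -/
noncomputable def contraction : (σ → K) →ₗ[K] Module.Dual K (MvPolynomial σ K) →ₗ[K]
    Module.Dual K (MvPolynomial σ K) :=
  Module.Dual.transpose ∘ₗ LinearMap.mul K (MvPolynomial σ K) ∘ₗ linearForm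

@[simp]
theorem contraction_apply (x : σ → K) (φ : Module.Dual K (MvPolynomial σ K))
    (f : MvPolynomial σ K) : contraction x φ f = φ (linearForm x * f) :=
  rfl

theorem isInverseSystem_contraction :
    IsInverseSystem (contraction (K := K) (σ := σ)) (homogeneousDual K σ) where
  comm x y φ := LinearMap.ext fun f => by simp [mul_left_comm]
  mapsTo x t φ hφ := mem_homogeneousDual.2 fun f => by
    rw [contraction_apply, contraction_apply, ← mem_homogeneousDual.1 hφ (linearForm x * f),
      add_comm t, homogeneousComponent_add_mul (linearForm_isHomogeneous x)]
  eq_zero t φ hφ h := by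
    classical
    refine LinearMap.ext fun f => ?_
    induction f using MvPolynomial.induction_on with
    | C a =>
      rw [← mem_homogeneousDual.1 hφ, homogeneousComponent_of_mem (isHomogeneous_C σ a),
        if_neg t.succ_ne_zero, map_zero, LinearMap.zero_apply]
    | add p q hp hq => rw [map_add, hp, hq, ← map_add]
    | mul_X p i _ =>
      rw [mul_comm, ← linearForm_single, ← contraction_apply, h]
      rfl

theorem exists_contraction_eq_eval_smul {φ : Module.Dual K (MvPolynomial σ K)} {l : σ → K}
    (h : ∀ x, ∃ c : K, contraction x φ = c • contraction l φ) :
    ∃ q : σ → K, ∀ x, contraction x φ = eval q (linearForm x) • contraction l φ := by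
  classical
  choose c hc using h
  refine ⟨fun i => c (Pi.single i 1), fun x => ?_⟩
  conv_lhs => rw [pi_eq_sum_univ' x]
  simp only [map_sum, map_smul, LinearMap.sum_apply, LinearMap.smul_apply, eval_linearForm,
    Finset.sum_smul, mul_smul, ← hc]

theorem apply_mul_eq_eval_mul {φ : Module.Dual K (MvPolynomial σ K)} {l q : σ → K}
    (h : ∀ x, contraction x φ = eval q (linearForm x) • contraction l φ) {t : ℕ}
    {f : MvPolynomial σ K} (hf : f.IsHomogeneous t) (g : MvPolynomial σ K) :
    φ (f * g) = eval q f * φ (linearForm l ^ t * g) := by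
  rw [← mem_homogeneousSubmodule, ← homogeneousSubmodule_one_pow] at hf
  induction hf using Submodule.pow_induction_on_left' generalizing g with
  | algebraMap r => simp [← smul_eq_C_mul, algebraMap_eq]
  | add f f' t _ _ ih ih' => rw [add_mul, map_add, ih, ih', map_add, add_mul]
  | mem_mul m hm t f _ ih =>
    obtain ⟨x, rfl⟩ := exists_linearForm_eq hm
    have hx := LinearMap.congr_fun (h x) (f * g)
    simp only [contraction_apply, LinearMap.smul_apply, smul_eq_mul] at hx
    rw [mul_assoc, hx, mul_left_comm, ih, (eval q).map_mul, mul_assoc, pow_succ, mul_assoc]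

theorem exists_eval_of_isPure {φ : Module.Dual K (MvPolynomial σ K)} {t : ℕ}
    (hφ : φ ∈ homogeneousDual K σ (t + 1)) (hpure : IsPure contraction φ) :
    ∃ q : σ → K, q ≠ 0 ∧ (∀ f, f.IsHomogeneous (t + 1) → φ f = 0 → eval q f = 0) ∧
      ∀ x, contraction x φ = 0 → eval q (linearForm x) = 0 := by
  obtain ⟨hφ0, l, hl⟩ := hpure
  obtain ⟨q, hq⟩ := exists_contraction_eq_eval_smul hl
  have hφ_eval : ∀ f, f.IsHomogeneous (t + 1) → φ f = eval q f * φ (linearForm l ^ (t + 1)) :=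
    fun f hf => by simpa using apply_mul_eq_eval_mul hq hf 1
  have hlpow : φ (linearForm l ^ (t + 1)) ≠ 0 := fun h0 => hφ0 <| LinearMap.ext fun f => by
    rw [← mem_homogeneousDual.1 hφ, hφ_eval _ (homogeneousComponent_isHomogeneous _ f), h0,
      mul_zero, LinearMap.zero_apply]
  have hlφ : contraction l φ ≠ 0 := fun h0 => hlpow <| by
    rw [pow_succ', ← contraction_apply, h0, LinearMap.zero_apply]
  refine ⟨q, ?_, fun f hf h0 => ?_, fun x hx => ?_⟩
  · rintro rfl
    refine hlpow ?_
    rw [hφ_eval _ (by simpa using (linearForm_isHomogeneous l).pow (t + 1)), map_pow,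
      eval_linearForm]
    simp
  · exact (mul_eq_zero.1 ((hφ_eval f hf).symm.trans h0)).resolve_right hlpow
  · exact (smul_eq_zero.1 ((hq x).symm.trans hx)).resolve_right hlφ

end Contraction

section HilbertFunction

variable {K σ : Type*} [Field K]

theorem finiteDimensional_homogeneousSubmodule [Finite σ] (t : ℕ) :
    FiniteDimensional K (homogeneousSubmodule σ K t) :=
  Module.Finite.iff_fg.2 (homogeneousSubmodule_fg σ K t)

theorem mem_of_hilb_eq_zero [Finite σ] {I : Ideal (MvPolynomial σ K)} {t : ℕ} (h : hilb I t = 0)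
    {f : MvPolynomial σ K} (hf : f.IsHomogeneous t) : f ∈ I := by
  have := finiteDimensional_homogeneousSubmodule (K := K) (σ := σ) t
  refine Ideal.Quotient.eq_zero_iff_mem.1 ((Submodule.mem_bot K).1 ?_)
  rw [← Submodule.finrank_eq_zero.1 h]
  exact Submodule.mem_map_of_mem hf

theorem eq_zero_of_le_ker_eval [Finite σ] {I : Ideal (MvPolynomial σ K)} {q : σ → K} {t : ℕ}
    (hI : I ≤ RingHom.ker (eval q)) (h : hilb I t = 0) : q = 0 := by
  refine funext fun i => eq_zero_of_pow_eq_zero (n := t) ?_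
  have hX := hI (mem_of_hilb_eq_zero h (isHomogeneous_X_pow i t))
  rwa [RingHom.mem_ker, map_pow, eval_X] at hX

theorem hilb_eq_finrank_map {F : Type*} [AddCommGroup F] [Module K F] [Finite σ]
    {I : Ideal (MvPolynomial σ K)} {t : ℕ} (g : MvPolynomial σ K →ₗ[K] F)
    (hg : ∀ f, f.IsHomogeneous t → (f ∈ I ↔ g f = 0)) :
    hilb I t = finrank K ((homogeneousSubmodule σ K t).map g) := by
  have := finiteDimensional_homogeneousSubmodule (K := K) (σ := σ) t
  have hker : homogeneousSubmodule σ K t ⊓ ker (Ideal.Quotient.mkₐ K I).toLinearMap =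
      homogeneousSubmodule σ K t ⊓ ker g :=
    Submodule.ext fun f => and_congr_right fun hf => Ideal.Quotient.eq_zero_iff_mem.trans (hg f hf)
  have hI := finrank_map_add_finrank_inf_ker (Ideal.Quotient.mkₐ K I).toLinearMap
    (homogeneousSubmodule σ K t)
  rw [hker] at hI
  exact Nat.add_right_cancel (hI.trans (finrank_map_add_finrank_inf_ker g _).symm)

variable [Fintype σ]

theorem pureFree_contraction {I : Ideal (MvPolynomial σ K)} {t N : ℕ} {a : σ → K}
    (hbpf : hilb (compIdeal I (t + 1) ⊔ Ideal.span {linearForm a}) N = 0)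
    {V : Submodule K (Module.Dual K (MvPolynomial σ K))} (hV : V ≤ homogeneousDual K σ (t + 1))
    (hVI : ∀ φ ∈ V, ∀ f ∈ I, f.IsHomogeneous (t + 1) → φ f = 0)
    (hVa : V ≤ ker (contraction a)) : PureFree contraction V := by
  intro φ hφ hpure
  obtain ⟨q, hq0, hqI, hqa⟩ := exists_eval_of_isPure (hV hφ) hpure
  refine hq0 (eq_zero_of_le_ker_eval (sup_le ?_ ?_) hbpf)
  · exact Ideal.span_le.2 fun f ⟨hfI, hf⟩ => hqI f hf (hVI φ hφ f hfI hf)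
  · exact (Ideal.span_singleton_le_iff_mem _).2 (hqa a (hVa hφ))

end HilbertFunction

section Points

variable {K σ ι : Type*} [Field K]

/-- Evaluation of polynomials at a family of vectors. -/
noncomputable def evalAt (p : ι → σ → K) : MvPolynomial σ K →ₐ[K] ι → K :=
  AlgHom.pi fun i => aeval (p i)

@[simp]
theorem evalAt_apply (p : ι → σ → K) (f : MvPolynomial σ K) (i : ι) :
    evalAt p f i = eval (p i) f := by
  simp [evalAt]

section Action

variable [Fintype σ]

/-- A linear form acts on `ι → K` by pointwise multiplication with its values at the points. -/
noncomputable def pointAction (p : ι → σ → K) : (σ → K) →ₗ[K] (ι → K) →ₗ[K] ι → K :=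
  LinearMap.mul K (ι → K) ∘ₗ (evalAt p).toLinearMap ∘ₗ linearForm

@[simp]
theorem pointAction_apply (p : ι → σ → K) (x : σ → K) (u : ι → K) :
    pointAction p x u = evalAt p (linearForm x) * u :=
  rfl

theorem pointAction_comm (p : ι → σ → K) (x y : σ → K) (u : ι → K) :
    pointAction p x (pointAction p y u) = pointAction p y (pointAction p x u) :=
  mul_left_comm _ _ _

theorem pointAction_eq_self {p : ι → σ → K} {a : σ → K} (ha : evalAt p (linearForm a) = 1)
    (u : ι → K) : pointAction p a u = u := by
  rw [pointAction_apply, ha, one_mul]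

theorem exists_linearForm_evalAt_ne_zero {p : ι → σ → K} (hp : Function.Injective p) {a : σ → K}
    (ha : evalAt p (linearForm a) = 1) {i j : ι} (hij : i ≠ j) :
    ∃ x, evalAt p (linearForm x) j = 0 ∧ evalAt p (linearForm x) i ≠ 0 := by
  classical
  obtain ⟨s, hs⟩ := Function.ne_iff.1 (hp.ne hij)
  have hval : ∀ l, evalAt p (linearForm (Pi.single s 1 - p j s • a)) l = p l s - p j s := by
    intro l
    rw [map_sub, map_sub, map_smul, map_smul, ha, linearForm_single]
    simp
  exact ⟨_, (hval j).trans (sub_self _), (hval i).trans_ne (sub_ne_zero.2 hs)⟩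

end Action

variable [Fintype ι]

/-- The functional on degree `t` polynomials with weight `u i` at the `i`-th point. -/
noncomputable def pointFunctional (p : ι → σ → K) (t : ℕ) :
    (ι → K) →ₗ[K] Module.Dual K (MvPolynomial σ K) :=
  ((evalAt p).toLinearMap ∘ₗ homogeneousComponent t).dualMap ∘ₗ dotProductBilin K K

@[simp]
theorem pointFunctional_apply (p : ι → σ → K) (t : ℕ) (u : ι → K) (f : MvPolynomial σ K) :
    pointFunctional p t u f = u ⬝ᵥ evalAt p (homogeneousComponent t f) :=
  rfl

theorem pointFunctional_mem_homogeneousDual (p : ι → σ → K) (t : ℕ) (u : ι → K) :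
    pointFunctional p t u ∈ homogeneousDual K σ t :=
  mem_homogeneousDual.2 fun f => by
    rw [pointFunctional_apply, pointFunctional_apply,
      homogeneousComponent_eq_self (homogeneousComponent_isHomogeneous t f)]

theorem map_pointFunctional_le_homogeneousDual (p : ι → σ → K) (A : Submodule K (ι → K)) (t : ℕ) :
    A.map (pointFunctional p t) ≤ homogeneousDual K σ t :=
  Submodule.map_le_iff_le_comap.2 fun u _ => pointFunctional_mem_homogeneousDual p t u

theorem pointFunctional_eq_zero (p : ι → σ → K) {t : ℕ} (u : ι → K) {f : MvPolynomial σ K}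
    (hf : f.IsHomogeneous t) (h : evalAt p f = 0) : pointFunctional p t u f = 0 := by
  rw [pointFunctional_apply, homogeneousComponent_eq_self hf, h, dotProduct_zero]

theorem finrank_range_pointFunctional (p : ι → σ → K) (t : ℕ) :
    finrank K (pointFunctional p t).range =
      finrank K ((homogeneousSubmodule σ K t).map (evalAt p).toLinearMap) := by
  classical
  have hdot : (dotProductBilin K K : (ι → K) →ₗ[K] (ι → K) →ₗ[K] K).range = ⊤ :=
    (dotProductEquiv K ι).range
  have hcomp : (homogeneousComponent t : MvPolynomial σ K →ₗ[K] _).range =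
      homogeneousSubmodule σ K t :=
    le_antisymm (LinearMap.range_le_iff_comap.2 <| Submodule.eq_top_iff'.2
      (homogeneousComponent_isHomogeneous t)) fun f hf => ⟨f, homogeneousComponent_eq_self hf⟩
  rw [pointFunctional, LinearMap.range_comp_of_range_eq_top _ hdot,
    LinearMap.finrank_range_dualMap_eq_finrank_range, LinearMap.range_comp, hcomp]

/-- The weights `u : ι → K` that annihilate the values at the points of all forms of degree
`t - 1`; every weight is a relation in degree `0`. -/
noncomputable def relations (p : ι → σ → K) : ℕ → Submodule K (ι → K)
  | 0 => ⊤
  | t + 1 => ker (pointFunctional p t)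

theorem finrank_map_pointFunctional {p : ι → σ → K} {A : Submodule K (ι → K)} {t : ℕ}
    (hbot : relations p (t + 1) = ⊥) :
    finrank K (A.map (pointFunctional p t)) = finrank K A :=
  finrank_map_of_disjoint_ker (disjoint_bot_right.mono_right hbot.le)

theorem hilb_add_finrank_relations [Finite σ] {p : ι → σ → K} {I : Ideal (MvPolynomial σ K)}
    {t : ℕ} (hI : ∀ f, f.IsHomogeneous t → (f ∈ I ↔ evalAt p f = 0)) :
    hilb I t + finrank K (relations p (t + 1)) = Fintype.card ι := by
  rw [hilb_eq_finrank_map (evalAt p).toLinearMap hI, ← finrank_range_pointFunctional,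
    relations, LinearMap.finrank_range_add_finrank_ker, Module.finrank_fintype_fun_eq_card]

variable [Fintype σ]

theorem contraction_pointFunctional (p : ι → σ → K) (t : ℕ) (x : σ → K) (u : ι → K) :
    contraction x (pointFunctional p (t + 1) u) = pointFunctional p t (pointAction p x u) :=
  LinearMap.ext fun f => by
    rw [contraction_apply, pointFunctional_apply, pointFunctional_apply, add_comm t,
      homogeneousComponent_add_mul (linearForm_isHomogeneous x), map_mul, pointAction_apply,
      mul_comm (evalAt p _) u]
    simp [dotProduct, mul_assoc]

theorem pointAction_mem_relations (p : ι → σ → K) (x : σ → K) {t : ℕ} {u : ι → K}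
    (hu : u ∈ relations p (t + 1)) : pointAction p x u ∈ relations p t := by
  cases t with
  | zero => exact Submodule.mem_top
  | succ t =>
    rw [relations, LinearMap.mem_ker] at hu ⊢
    rw [← contraction_pointFunctional, hu, map_zero]

theorem relations_antitone {p : ι → σ → K} {a : σ → K} (ha : evalAt p (linearForm a) = 1) :
    Antitone (relations p) :=
  antitone_nat_of_succ_le fun _ u hu => pointAction_eq_self ha u ▸ pointAction_mem_relations p a hu

theorem hvec_add_finrank_relations {p : ι → σ → K} {a : σ → K}
    (ha : evalAt p (linearForm a) = 1) {I : Ideal (MvPolynomial σ K)}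
    (hI : ∀ t f, f.IsHomogeneous t → (f ∈ I ↔ evalAt p f = 0)) (t : ℕ) :
    hvec I t + finrank K (relations p (t + 1)) = finrank K (relations p t) := by
  have ht := hilb_add_finrank_relations (hI t)
  cases t with
  | zero => rw [hvec, ht, relations, finrank_top, Module.finrank_fintype_fun_eq_card]
  | succ t =>
    have ht' := hilb_add_finrank_relations (hI t)
    have hle := Submodule.finrank_mono (relations_antitone ha (Nat.le_add_right (t + 1) 1))
    rw [hvec]
    omega

theorem relations_card_eq_bot {p : ι → σ → K} (hp : Function.Injective p) {a : σ → K}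
    (ha : evalAt p (linearForm a) = 1) : relations p (Fintype.card ι - 1 + 1) = ⊥ := by
  classical
  refine (Submodule.eq_bot_iff _).2 fun u hu => funext fun i => ?_
  choose! x hx hx' using fun j (hij : i ≠ j) => exists_linearForm_evalAt_ne_zero hp ha hij
  let f := ∏ j ∈ Finset.univ.erase i, linearForm (x j)
  have hf : f.IsHomogeneous (Fintype.card ι - 1) := by
    simpa using IsHomogeneous.prod (Finset.univ.erase i) (fun j => linearForm (x j)) (fun _ => 1)
      fun j _ => linearForm_isHomogeneous (x j)
  have hfi : evalAt p f i ≠ 0 := by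
    rw [map_prod, Finset.prod_apply]
    exact Finset.prod_ne_zero_iff.2 fun j hj => hx' j (Finset.ne_of_mem_erase hj).symm
  have hfj : ∀ j, j ≠ i → evalAt p f j = 0 := fun j hj => by
    rw [map_prod, Finset.prod_apply]
    exact Finset.prod_eq_zero (Finset.mem_erase_of_ne_of_mem hj (Finset.mem_univ j)) (hx j hj.symm)
  have hsum : u ⬝ᵥ evalAt p f = 0 := by
    simpa [homogeneousComponent_eq_self hf] using
      LinearMap.congr_fun (LinearMap.mem_ker.1 hu) f
  rw [dotProduct, Fintype.sum_eq_single i fun j hj => by rw [hfj j hj, mul_zero]] at hsum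
  exact (mul_eq_zero.1 hsum).resolve_right hfi

theorem relations_eq_bot {p : ι → σ → K} (hp : Function.Injective p) {a : σ → K}
    (ha : evalAt p (linearForm a) = 1) {I : Ideal (MvPolynomial σ K)}
    (hI : ∀ t f, f.IsHomogeneous t → (f ∈ I ↔ evalAt p f = 0)) {m : ℕ}
    (hm : ∀ t, m ≤ t → hvec I t = 0) : relations p m = ⊥ := by
  have hconst : ∀ t, m ≤ t → finrank K (relations p t) = finrank K (relations p m) := by
    intro t ht
    induction t, ht using Nat.le_induction with
    | base => rfl
    | succ t ht ih => rw [← ih, ← hvec_add_finrank_relations ha hI t, hm t ht, zero_add]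
  rw [← Submodule.finrank_eq_zero, ← hconst _ (le_max_left m (Fintype.card ι - 1 + 1)),
    Submodule.finrank_eq_zero, ← le_bot_iff, ← relations_card_eq_bot hp ha]
  exact relations_antitone ha (le_max_right _ _)

end Points

section Growth

variable {K σ ι : Type*} [Field K] [Fintype σ] [Fintype ι] {p : ι → σ → K}

theorem map_linearMultiples_pointAction (p : ι → σ → K) (t : ℕ) (A : Submodule K (ι → K)) :
    (linearMultiples (pointAction p) A).map (pointFunctional p t) =
      linearMultiples contraction (A.map (pointFunctional p (t + 1))) := by
  refine le_antisymm (Submodule.map_le_iff_le_comap.2 (linearMultiples_le_iff.2 fun x u hu => ?_))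
    (linearMultiples_le_iff.2 ?_)
  · rw [Submodule.mem_comap, ← contraction_pointFunctional]
    exact apply_mem_linearMultiples x (Submodule.mem_map_of_mem hu)
  · rintro x _ ⟨u, hu, rfl⟩
    rw [contraction_pointFunctional]
    exact Submodule.mem_map_of_mem (apply_mem_linearMultiples x hu)

theorem map_iterate_linearMultiples_pointAction (p : ι → σ → K) (t j : ℕ)
    (A : Submodule K (ι → K)) :
    ((linearMultiples (pointAction p))^[j] A).map (pointFunctional p t) =
      (linearMultiples contraction)^[j] (A.map (pointFunctional p (t + j))) := by
  induction j generalizing t with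
  | zero => rfl
  | succ j ih =>
    rw [Function.iterate_succ_apply', Function.iterate_succ_apply', map_linearMultiples_pointAction,
      ih, add_right_comm, add_assoc]

theorem linearMultiples_le_relations {A : Submodule K (ι → K)} {t : ℕ}
    (hA : A ≤ relations p (t + 1)) : linearMultiples (pointAction p) A ≤ relations p t :=
  linearMultiples_le_iff.2 fun x _ hu => pointAction_mem_relations p x (hA hu)

theorem iterate_linearMultiples_le_relations {A : Submodule K (ι → K)} {t j : ℕ}
    (hA : A ≤ relations p (t + j)) : (linearMultiples (pointAction p))^[j] A ≤ relations p t := by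
  induction j generalizing t with
  | zero => exact hA
  | succ j ih =>
    rw [Function.iterate_succ_apply']
    exact linearMultiples_le_relations (ih (by rwa [add_right_comm, add_assoc]))

theorem finrank_add_finrank_map_le_finrank_linearMultiples {a : σ → K}
    (ha : evalAt p (linearForm a) = 1) {A : Submodule K (ι → K)} {t : ℕ}
    (hA : A ≤ relations p (t + 1)) :
    finrank K A + finrank K ((linearMultiples (pointAction p) A).map (pointFunctional p t)) ≤
      finrank K (linearMultiples (pointAction p) A) := by
  rw [← finrank_map_add_finrank_inf_ker (pointFunctional p t) (linearMultiples _ A), add_comm]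
  exact Nat.add_le_add_left (Submodule.finrank_mono (le_inf (fun u hu =>
    pointAction_eq_self ha u ▸ apply_mem_linearMultiples a hu) hA)) _

theorem finrank_iterate_add_le {a : σ → K} (ha : evalAt p (linearForm a) = 1)
    {A : Submodule K (ι → K)} {t j : ℕ} (hA : A ≤ relations p (t + j + 1)) :
    finrank K ((linearMultiples (pointAction p))^[j] A : Submodule K (ι → K)) +
        finrank K ((linearMultiples contraction)^[j + 1] (A.map (pointFunctional p (t + j + 1))) :
          Submodule K (Module.Dual K (MvPolynomial σ K))) ≤
      finrank K ((linearMultiples (pointAction p))^[j + 1] A : Submodule K (ι → K)) := by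
  rw [add_assoc, ← map_iterate_linearMultiples_pointAction, Function.iterate_succ_apply']
  exact finrank_add_finrank_map_le_finrank_linearMultiples ha
    (iterate_linearMultiples_le_relations (by rwa [add_right_comm]))

theorem finrank_map_relations_add {a : σ → K} (ha : evalAt p (linearForm a) = 1) (t : ℕ) :
    finrank K ((relations p t).map (pointFunctional p t)) + finrank K (relations p (t + 1)) =
      finrank K (relations p t) := by
  have hinf : relations p t ⊓ ker (pointFunctional p t) = relations p (t + 1) :=
    inf_eq_right.2 (relations_antitone ha t.le_succ)
  rw [← hinf, finrank_map_add_finrank_inf_ker]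

theorem pureFree_map_relations {a : σ → K} (ha : evalAt p (linearForm a) = 1)
    {I : Ideal (MvPolynomial σ K)} {t N : ℕ}
    (hI : ∀ f, f.IsHomogeneous (t + 1) → (f ∈ I ↔ evalAt p f = 0))
    (hbpf : hilb (compIdeal I (t + 1) ⊔ Ideal.span {linearForm a}) N = 0) :
    PureFree contraction ((relations p (t + 1)).map (pointFunctional p (t + 1))) := by
  refine pureFree_contraction hbpf (map_pointFunctional_le_homogeneousDual p _ _) ?_
    (Submodule.map_le_iff_le_comap.2 fun u hu => ?_)
  · rintro _ ⟨u, -, rfl⟩ f hfI hf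
    exact pointFunctional_eq_zero p u hf ((hI f hf).1 hfI)
  · rw [Submodule.mem_comap, LinearMap.mem_ker, contraction_pointFunctional,
      pointAction_eq_self ha]
    exact hu

variable {n : ℕ}

theorem linearMultiples_map_le_map_relations {B : Submodule K (ι → K)}
    (hB : B ≤ relations p (n + 1)) :
    linearMultiples contraction (B.map (pointFunctional p (n + 1))) ≤
      (relations p n).map (pointFunctional p n) := by
  rw [← map_linearMultiples_pointAction]
  exact Submodule.map_mono (linearMultiples_le_relations hB)

theorem finrank_lt_finrank_linearMultiples_map [IsAlgClosed K]
    (hbot : relations p (n + 2) = ⊥)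
    (hpure : PureFree contraction ((relations p n).map (pointFunctional p n)))
    (hn : finrank K ((relations p n).map (pointFunctional p n)) ≤ n)
    {B : Submodule K (ι → K)} (hB : B ≤ relations p (n + 1)) (hB0 : B ≠ ⊥) :
    finrank K B <
      finrank K (linearMultiples contraction (B.map (pointFunctional p (n + 1)))) := by
  have hle := linearMultiples_map_le_map_relations hB
  have hfin := finrank_map_pointFunctional hbot (A := B)
  have hW0 : B.map (pointFunctional p (n + 1)) ≠ ⊥ := by
    rwa [Ne, ← Submodule.finrank_eq_zero, hfin, Submodule.finrank_eq_zero]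
  rw [← hfin]
  exact isInverseSystem_contraction.finrank_lt_finrank_linearMultiples
    (map_pointFunctional_le_homogeneousDual p B _) hW0
    (isInverseSystem_contraction.pureFree_of_linearMultiples
      (map_pointFunctional_le_homogeneousDual p B _) (hpure.mono hle))
    ((Submodule.finrank_mono hle).trans hn)

theorem two_mul_finrank_lt_finrank_linearMultiples [IsAlgClosed K] {a : σ → K}
    (ha : evalAt p (linearForm a) = 1) (hbot : relations p (n + 2) = ⊥)
    (hpure : PureFree contraction ((relations p n).map (pointFunctional p n)))
    (hn : finrank K ((relations p n).map (pointFunctional p n)) ≤ n)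
    {B : Submodule K (ι → K)} (hB : B ≤ relations p (n + 1)) (hB0 : B ≠ ⊥) :
    2 * finrank K B + 1 ≤ finrank K (linearMultiples (pointAction p) B) := by
  have hlt := finrank_lt_finrank_linearMultiples_map hbot hpure hn hB hB0
  have hadd := finrank_add_finrank_map_le_finrank_linearMultiples ha hB
  rw [map_linearMultiples_pointAction] at hadd
  omega

theorem map_pointAction_relations_le {x : σ → K}
    (hx : x ∈ annihilatorOn contraction ((relations p (n + 1)).map (pointFunctional p (n + 1)))) :
    (relations p (n + 1)).map (pointAction p x) ≤ relations p (n + 1) := by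
  rintro _ ⟨u, hu, rfl⟩
  rw [relations, LinearMap.mem_ker, ← contraction_pointFunctional, ← Submodule.mem_bot K,
    ← mem_annihilatorOn.1 hx]
  exact Submodule.mem_map_of_mem (Submodule.mem_map_of_mem hu)

theorem annihilatorOn_map_relations_le [IsAlgClosed K] {a : σ → K}
    (ha : evalAt p (linearForm a) = 1) (hbot : relations p (n + 2) = ⊥)
    (hpure : PureFree contraction ((relations p n).map (pointFunctional p n)))
    (hn : finrank K ((relations p n).map (pointFunctional p n)) ≤ n)
    (hT0 : relations p (n + 1) ≠ ⊥)
    (hT : finrank K (relations p n) ≤ 2 * finrank K (relations p (n + 1)) + 1) :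
    annihilatorOn contraction ((relations p (n + 1)).map (pointFunctional p (n + 1))) ≤
      annihilatorOn (pointAction p) (relations p (n + 1)) ⊔ K ∙ a := by
  have hmap_a (c : K) (u : ι → K) : pointAction p (c • a) u = c • u := by
    rw [map_smul, LinearMap.smul_apply, pointAction_eq_self ha]
  intro x hx
  have hxT := map_pointAction_relations_le hx
  obtain ⟨c, hc⟩ := exists_not_disjoint_ker_sub_smul (g := pointAction p a) hT0
    (hxT.trans fun u hu => ⟨u, hu, pointAction_eq_self ha u⟩)
  rw [← map_smul, ← map_sub] at hc
  have hy : x - c • a ∈ annihilatorOn (pointAction p) (relations p (n + 1)) := by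
    refine mem_annihilatorOn.2 (map_eq_bot_of_not_disjoint_ker (pointAction_comm p)
      (fun B hB hB0 => two_mul_finrank_lt_finrank_linearMultiples ha hbot hpure hn hB hB0)
      ((Submodule.finrank_mono (linearMultiples_le_relations le_rfl)).trans hT) ?_ hc)
    rintro _ ⟨u, hu, rfl⟩
    rw [map_sub, LinearMap.sub_apply, hmap_a]
    exact sub_mem (hxT (Submodule.mem_map_of_mem hu)) (Submodule.smul_mem _ c hu)
  exact Submodule.mem_sup.2 ⟨_, hy, _, Submodule.smul_mem _ c (Submodule.mem_span_singleton_self a),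
    sub_add_cancel _ _⟩

theorem card_le_finrank_annihilatorOn_relations_add_three [IsAlgClosed K] {a : σ → K}
    (ha : evalAt p (linearForm a) = 1) (hbot : relations p (n + 2) = ⊥)
    (hpure : PureFree contraction ((relations p n).map (pointFunctional p n)))
    (hT0 : relations p (n + 1) ≠ ⊥) (hTn : finrank K (relations p (n + 1)) + 1 ≤ n)
    (hT : finrank K (relations p n) ≤ 2 * finrank K (relations p (n + 1)) + 1) :
    Fintype.card σ ≤ finrank K (annihilatorOn (pointAction p) (relations p (n + 1))) + 3 := by
  have hadd := finrank_map_relations_add ha n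
  have hn : finrank K ((relations p n).map (pointFunctional p n)) ≤ n := by omega
  have hlt := finrank_lt_finrank_linearMultiples_map hbot hpure hn le_rfl hT0
  have hle := linearMultiples_map_le_map_relations (le_refl (relations p (n + 1)))
  have hfin := finrank_map_pointFunctional hbot (A := relations p (n + 1))
  have hle' := Submodule.finrank_mono hle
  have hW0 : (relations p (n + 1)).map (pointFunctional p (n + 1)) ≠ ⊥ := by
    rwa [Ne, ← Submodule.finrank_eq_zero, hfin, Submodule.finrank_eq_zero]
  have hcodim := isInverseSystem_contraction.finrank_le_finrank_annihilatorOn_add_two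
    (map_pointFunctional_le_homogeneousDual p (relations p (n + 1)) (n + 1)) hW0 (hpure.mono hle)
    (by omega) (by omega)
  have hsup := Submodule.finrank_mono (annihilatorOn_map_relations_le ha hbot hpure hn hT0 hT)
  have hadd' := Submodule.finrank_add_le_finrank_add_finrank
    (annihilatorOn (pointAction p) (relations p (n + 1))) (K ∙ a)
  have hspan := finrank_span_le_card (R := K) ({a} : Set (σ → K))
  rw [Set.toFinset_card, Set.card_singleton] at hspan
  rw [Module.finrank_fintype_fun_eq_card] at hcodim
  omega

end Growth

section Count

variable {K σ ι : Type*} [Field K] [Fintype σ] {p : ι → σ → K}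

theorem sum_range_min_add_one {k n : ℕ} (hkn : k ≤ n) :
    ∑ i ∈ Finset.range (n + 1), min (k + 1) i = (k + 1).choose 2 + (k + 1) * (n - k) := by
  induction n, hkn using Nat.le_induction with
  | base =>
    rw [Nat.sub_self, mul_zero, add_zero, Nat.choose_two_right, ← Finset.sum_range_id]
    exact Finset.sum_congr rfl fun i hi => min_eq_right (Finset.mem_range.1 hi).le
  | succ n hn ih =>
    rw [Finset.sum_range_succ, ih, min_eq_left (Nat.succ_le_succ hn), Nat.succ_sub hn, Nat.mul_succ,
      add_assoc]

theorem sum_min_le_finrank_iterate_linearMultiples [IsAlgClosed K] [Fintype ι] {n : ℕ} {a : σ → K}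
    (ha : evalAt p (linearForm a) = 1) (hbot : relations p (n + 2) = ⊥)
    (hpure : PureFree contraction ((relations p n).map (pointFunctional p n)))
    (hn : finrank K ((relations p n).map (pointFunctional p n)) ≤ n)
    (hT0 : relations p (n + 1) ≠ ⊥) (j d : ℕ) (hjd : d + j = n) :
    2 * finrank K (relations p (n + 1)) + 1 +
        ∑ i ∈ Finset.Ico (d + 1) (n + 1), min (finrank K (relations p (n + 1)) + 2) i ≤
      finrank K ((linearMultiples (pointAction p))^[j + 1] (relations p (n + 1))) := by
  induction j generalizing d with
  | zero =>
    obtain rfl : d = n := hjd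
    rw [Finset.Ico_self, Finset.sum_empty, add_zero]
    exact two_mul_finrank_lt_finrank_linearMultiples ha hbot hpure hn le_rfl hT0
  | succ j ih =>
    obtain rfl : d + (j + 1) = n := hjd
    have hprev := ih (d + 1) (by omega)
    have hle := linearMultiples_map_le_map_relations (le_refl (relations p (d + (j + 1) + 1)))
    have hfin := finrank_map_pointFunctional hbot (A := relations p (d + (j + 1) + 1))
    have hW0 : (relations p (d + (j + 1) + 1)).map (pointFunctional p (d + (j + 1) + 1)) ≠ ⊥ := by
      rwa [Ne, ← Submodule.finrank_eq_zero, hfin, Submodule.finrank_eq_zero]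
    have hmin := isInverseSystem_contraction.min_finrank_add_two_le_finrank_iterate
      (d := d) (j := j) (map_pointFunctional_le_homogeneousDual p _ (d + (j + 1) + 1)) hW0
      (hpure.mono hle)
    have hadd := (Nat.add_le_add_left hmin _).trans
      (finrank_iterate_add_le ha (le_refl (relations p (d + (j + 1) + 1))))
    rw [Finset.sum_eq_sum_Ico_succ_bot (by omega), ← hfin]
    rw [← hfin] at hprev
    omega

theorem exists_linearForms_forall_finrank_iterate_le [Finite ι] {A : Submodule K (ι → K)} {m : ℕ}
    (hm : m ≤ finrank K (annihilatorOn (pointAction p) A)) :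
    ∃ ℓ : Fin m → MvPolynomial σ K, (∀ i, (ℓ i).IsHomogeneous 1) ∧ LinearIndependent K ℓ ∧
      ∀ j, finrank K ((linearMultiples (pointAction p))^[j] A : Submodule K (ι → K)) ≤
        {i | ∀ s, eval (p i) (ℓ s) = 0}.ncard := by
  obtain ⟨x, hx⟩ := exists_linearIndependent_of_le_finrank hm
  have hx' := hx.map' (annihilatorOn (pointAction p) A).subtype (Submodule.ker_subtype _)
  refine ⟨fun s => linearForm (x s), fun s => linearForm_isHomogeneous _,
    hx'.map' linearForm (LinearMap.ker_eq_bot.2 linearForm_injective),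
    fun j => finrank_le_ncard_of_forall_notMem_eq_zero fun u hu i hi => ?_⟩
  obtain ⟨s, hs⟩ := not_forall.1 hi
  have hxu := mem_annihilatorOn.1
    (annihilatorOn_le_annihilatorOn_iterate (pointAction_comm p) j (x s).2)
  have hxui := congr_fun (LinearMap.le_ker_iff_map.2 hxu hu) i
  rw [pointAction_apply, Pi.mul_apply, evalAt_apply] at hxui
  exact (mul_eq_zero.1 hxui).resolve_left hs

theorem exists_linearForms_le_ncard [IsAlgClosed K] [Finite ι] {n k N : ℕ} {a : σ → K}
    (hp : Function.Injective p) (ha : evalAt p (linearForm a) = 1)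
    {I : Ideal (MvPolynomial σ K)} (hI : ∀ t f, f.IsHomogeneous t → (f ∈ I ↔ evalAt p f = 0))
    (hk : 2 ≤ k) (hkn : k ≤ n) (hn : hvec I n = k) (hn1 : hvec I (n + 1) + 1 = k)
    (htail : ∀ t, n + 2 ≤ t → hvec I t = 0)
    (hbpf : hilb (compIdeal I n ⊔ Ideal.span {linearForm a}) N = 0) :
    ∃ ℓ : Fin (Fintype.card σ - 3) → MvPolynomial σ K,
      (∀ i, (ℓ i).IsHomogeneous 1) ∧ LinearIndependent K ℓ ∧
      (k + 1).choose 2 + (k + 1) * (n - k + 2) - 3 ≤ {i | ∀ s, eval (p i) (ℓ s) = 0}.ncard := by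
  have := Fintype.ofFinite ι
  have hbot := relations_eq_bot hp ha hI htail
  have hT := hvec_add_finrank_relations ha hI (n + 1)
  rw [hbot, finrank_bot, add_zero] at hT
  have hRn := hvec_add_finrank_relations ha hI n
  have hV := finrank_map_relations_add ha n
  have hT0 : relations p (n + 1) ≠ ⊥ := by
    rw [Ne, ← Submodule.finrank_eq_zero]
    omega
  have hpure : PureFree contraction ((relations p n).map (pointFunctional p n)) := by
    obtain ⟨t, rfl⟩ := Nat.exists_eq_add_of_le' (show 1 ≤ n by omega)
    exact pureFree_map_relations ha (hI (t + 1)) hbpf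
  have hann := card_le_finrank_annihilatorOn_relations_add_three ha hbot hpure hT0
    (by omega) (by omega)
  obtain ⟨ℓ, hℓ, hℓ_indep, hℓ_card⟩ :=
    exists_linearForms_forall_finrank_iterate_le (Nat.sub_le_of_le_add hann)
  refine ⟨ℓ, hℓ, hℓ_indep, le_trans ?_ (hℓ_card (n + 1))⟩
  have hsum := sum_min_le_finrank_iterate_linearMultiples ha hbot hpure (by omega) hT0 n 0
    (Nat.zero_add n)
  have hsum' := sum_range_min_add_one hkn
  rw [Finset.range_eq_Ico, Finset.sum_eq_sum_Ico_succ_bot n.succ_pos, Nat.min_zero, zero_add]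
    at hsum'
  rw [show finrank K (relations p (n + 1)) + 2 = k + 1 by omega, hsum'] at hsum
  rw [mul_add]
  omega

end Count

section ProjectivePoints

variable {K : Type*} [Field K] {m : ℕ}

theorem eval_smul_of_isHomogeneous {R σ : Type*} [CommSemiring R] {f : MvPolynomial σ R} {t : ℕ}
    (hf : f.IsHomogeneous t) (c : R) (v : σ → R) : eval (c • v) f = c ^ t * eval v f := by
  rw [eval_eq, eval_eq, Finset.mul_sum]
  refine Finset.sum_congr rfl fun d hd => ?_
  rw [hf.degree_eq_sum_deg_support hd]
  simp only [Pi.smul_apply, smul_eq_mul, mul_pow, Finset.prod_mul_distrib,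
    Finset.prod_pow_eq_pow_sum, mul_left_comm]

theorem mem_pointsIdeal_iff {Z : Set (Fin m → K)} {c : Z → K} (hc : ∀ z, c z ≠ 0) {t : ℕ}
    {f : MvPolynomial (Fin m) K} (hf : f.IsHomogeneous t) :
    f ∈ pointsIdeal Z ↔ evalAt (fun z : Z => c z • (z : Fin m → K)) f = 0 := by
  simp only [pointsIdeal, Ideal.mem_iInf, RingHom.mem_ker, funext_iff, Pi.zero_apply,
    evalAt_apply, Subtype.forall]
  refine forall₂_congr fun v hv => ⟨fun h => h _, fun h b => ?_⟩
  rw [eval_smul_of_isHomogeneous hf] at h ⊢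
  rw [(mul_eq_zero.1 h).resolve_left (pow_ne_zero t (hc _)), mul_zero]

theorem injective_smul_of_forall_ne_smul {Z : Set (Fin m → K)}
    (hZ : ∀ v ∈ Z, ∀ w ∈ Z, v ≠ w → ∀ c : K, w ≠ c • v) {c : Z → K} (hc : ∀ z, c z ≠ 0) :
    Function.Injective fun z : Z => c z • (z : Fin m → K) := by
  intro v w hvw
  by_contra hne
  refine hZ v v.2 w w.2 (Subtype.coe_injective.ne hne) ((c w)⁻¹ * c v) ?_
  rw [mul_smul, show c v • (v : Fin m → K) = c w • (w : Fin m → K) from hvw,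
    inv_smul_smul₀ (hc w)]

theorem ncard_setOf_eval_smul_eq_zero {κ : Type*} {Z : Set (Fin m → K)} {c : Z → K}
    (hc : ∀ z, c z ≠ 0) {ℓ : κ → MvPolynomial (Fin m) K} (hℓ : ∀ s, (ℓ s).IsHomogeneous 1) :
    {z : Z | ∀ s, eval (c z • (z : Fin m → K)) (ℓ s) = 0}.ncard =
      {v ∈ Z | ∀ s, eval v (ℓ s) = 0}.ncard := by
  rw [← Set.ncard_image_of_injective _ Subtype.val_injective]
  congr 1
  ext v
  simp [eval_smul_of_isHomogeneous (hℓ _), hc, and_comm]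

end ProjectivePoints

/-- **Corollary (many points on a plane).**  Let `Z ⊂ ℙ^r` be a finite reduced set of points
whose `h`-vector has value `k` in degree `n` and `k-1` in degree `n+1` (`n ≥ k ≥ 2`) and is `0`
in all degrees `≥ n+2`, and such that the linear systems `|[J]_n|` and `|[J]_{n+1}|` (`J` the
artinian reduction of `I_Z` by a general linear form `L` missing the points of `Z`) are
basepoint free (the schemes cut out by `⟨[I_Z]_n⟩ + (L)` and `⟨[I_Z]_{n+1}⟩ + (L)` are empty).
Then at least `C(k+1,2) + (k+1)(n-k+2) - 3` points of `Z` lie on a plane: a two-dimensional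
linear subspace of `ℙ^r`, cut out by `r-2` linearly independent linear forms. -/
theorem points_basepointFree_count_on_plane
    {K : Type*} [Field K] [IsAlgClosed K] {r n k : ℕ}
    (Z : Finset (Fin (r + 1) → K))
    (hZ0 : ∀ v ∈ Z, v ≠ (0 : Fin (r + 1) → K))
    (hZdist : ∀ v ∈ Z, ∀ w ∈ Z, v ≠ w → ∀ c : K, w ≠ c • v)
    (hk : 2 ≤ k) (hkn : k ≤ n)
    (hhn : hvec (pointsIdeal (↑Z : Set (Fin (r + 1) → K))) n = k)
    (hhn1 : hvec (pointsIdeal (↑Z : Set (Fin (r + 1) → K))) (n + 1) + 1 = k)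
    (hhtail : ∀ t, n + 2 ≤ t → hvec (pointsIdeal (↑Z : Set (Fin (r + 1) → K))) t = 0)
    (hbpf : ∃ L : MvPolynomial (Fin (r + 1)) K, L.IsHomogeneous 1 ∧ L ≠ 0 ∧
      (∀ v ∈ Z, eval v L ≠ 0) ∧
      (∃ N : ℕ, ∀ t, N ≤ t →
        hilb (compIdeal (pointsIdeal (↑Z : Set (Fin (r + 1) → K))) n ⊔ Ideal.span {L}) t = 0) ∧
      (∃ N : ℕ, ∀ t, N ≤ t →
        hilb (compIdeal (pointsIdeal (↑Z : Set (Fin (r + 1) → K))) (n + 1) ⊔ Ideal.span {L}) t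
          = 0)) :
    ∃ ℓ : Fin (r - 2) → MvPolynomial (Fin (r + 1)) K,
      (∀ i, (ℓ i).IsHomogeneous 1) ∧ LinearIndependent K ℓ ∧
      Nat.choose (k + 1) 2 + (k + 1) * (n - k + 2) - 3
        ≤ Set.ncard {v ∈ (↑Z : Set (Fin (r + 1) → K)) | ∀ i, eval v (ℓ i) = 0} := by
  obtain ⟨L, hL, -, hLZ, ⟨N, hN⟩, -⟩ := hbpf
  obtain ⟨a, rfl⟩ := exists_linearForm_eq hL
  have hc : ∀ z : (↑Z : Set (Fin (r + 1) → K)), (eval (z : Fin (r + 1) → K) (linearForm a))⁻¹ ≠ 0 :=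
    fun z => inv_ne_zero (hLZ z z.2)
  have ha : evalAt (fun z : (↑Z : Set (Fin (r + 1) → K)) =>
      (eval (z : Fin (r + 1) → K) (linearForm a))⁻¹ • (z : Fin (r + 1) → K)) (linearForm a) = 1 :=
    funext fun z => by
      rw [evalAt_apply, eval_smul_of_isHomogeneous hL, pow_one, inv_mul_cancel₀ (hLZ z z.2),
        Pi.one_apply]
  obtain ⟨ℓ, hℓ, hℓ_indep, hcard⟩ := exists_linearForms_le_ncard
    (injective_smul_of_forall_ne_smul hZdist hc) ha (fun t f hf => mem_pointsIdeal_iff hc hf)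
    hk hkn hhn hhn1 hhtail (hN N le_rfl)
  rw [ncard_setOf_eval_smul_eq_zero hc hℓ] at hcard
  rw [show r - 2 = Fintype.card (Fin (r + 1)) - 3 by simp]
  exact ⟨ℓ, hℓ, hℓ_indep, hcard⟩
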